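/- arXiv:0907.4294 — 2 statements merged into one kernel-verified Lean document; each statement's English description precedes it below -/
import Mathlib

section
/- (i) For every smooth compactly supported function f : ℝ → ℝ with support contained in (0, ∞), one has ∫₀^∞ ( f'(t)² − 2·cosh(t)^{−2}·f(t)² ) dt ≥ 0. (ii) For every δ > 0 there exists a smooth compactly supported function g : ℝ → ℝ with support contained in (−δ, ∞) such that ∫_ℝ ( g'(t)² − 2·cosh(t)^{−2}·g(t)² ) dt < 0. -/
open Real MeasureTheory Set Filter Topology

/-!
Let `Q(f) = ∫ f'² - q f²`. For `f = φ v` with `φ` compactly supported,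
`Q(φ v) = ∫ (φ' v)² - ∫ φ² v (v'' + q v)`.

Let `u` be an increasing bounded solution of `u'' + q u = 0` vanishing at `a`; for the catenoid,
`u = tanh`, `q = 2 / cosh²` and `a = 0`. Taking `v = u` and `φ = f / u` gives `Q(f) ≥ 0` for every
`f` supported in `(a, ∞)`.

For `b < s < a` set `c = -1 / u(s) > 0`, so that `1 + c u` is positive exactly on `(s, ∞)`. With
`ψ(y) = y e^{-1/y}` extended by zero to `y ≤ 0`, the function `v = ψ(1 + c u)` is smooth, bounded,
vanishes on `(-∞, s]`, and satisfies `v (v'' + q v) ≥ 0`, with strict inequality at `a`. If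
`φ(t) = χ((t - a) / k)` is a rescaled bump function, then `∫ (φ' v)² = O(1 / k)`, while
`∫ φ² v (v'' + q v)` stays bounded away from zero, so `Q(φ v) < 0` for `k` large.
-/

/-- The index form `f ↦ ∫ (f'² - q f²)` of the Jacobi operator `d²/dt² + q` on the real line; it is
the stability form on rotationally invariant functions when `q = 2 / cosh²`. The integral has the
junk value `0` when the integrand is not integrable, so it is applied only to `C¹` functions of
compact support. -/
noncomputable def indexForm (q f : ℝ → ℝ) : ℝ :=
  ∫ t, (deriv f t ^ 2 - q t * f t ^ 2)

section IndexForm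

variable {q f u v φ : ℝ → ℝ}

lemma setIntegral_eq_indexForm {s : Set ℝ} (hs : tsupport f ⊆ s) :
    ∫ t in s, (deriv f t ^ 2 - q t * f t ^ 2) = indexForm q f := by
  refine setIntegral_eq_integral_of_forall_compl_eq_zero fun t ht => ?_
  have hf : f t = 0 := image_eq_zero_of_notMem_tsupport fun h => ht (hs h)
  have hf' : deriv f t = 0 := image_eq_zero_of_notMem_tsupport fun h =>
    ht (hs (tsupport_deriv_subset h))
  simp [hf, hf']

lemma integral_deriv_eq_zero_of_hasCompactSupport (hf : ContDiff ℝ 1 f)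
    (hfc : HasCompactSupport f) : ∫ t, deriv f t = 0 :=
  integral_eq_zero_of_hasDerivAt_of_integrable
    (fun t => (hf.differentiable one_ne_zero t).hasDerivAt)
    ((hf.continuous_deriv le_rfl).integrable_of_hasCompactSupport hfc.deriv)
    (hf.continuous.integrable_of_hasCompactSupport hfc)

lemma deriv_mul_sq_sub_eq (hφ : Differentiable ℝ φ) (hv : Differentiable ℝ v)
    (hv' : Differentiable ℝ (deriv v)) (t : ℝ) :
    deriv (φ * v) t ^ 2 - q t * (φ * v) t ^ 2 =
      deriv (φ ^ 2 * (v * deriv v)) t +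
        ((deriv φ t * v t) ^ 2 - φ t ^ 2 * (v t * (deriv (deriv v) t + q t * v t))) := by
  have hφt := (hφ t).hasDerivAt
  have hvt := (hv t).hasDerivAt
  rw [(hφt.mul hvt).deriv, ((hφt.pow 2).mul (hvt.mul (hv' t).hasDerivAt)).deriv]
  simp only [Pi.mul_apply, Pi.pow_apply]
  ring

lemma indexForm_mul (hq : Continuous q) (hφ : ContDiff ℝ 1 φ) (hφc : HasCompactSupport φ)
    (hv : ContDiff ℝ 2 v) :
    indexForm q (φ * v) = (∫ t, (deriv φ t * v t) ^ 2) -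
      ∫ t, φ t ^ 2 * (v t * (deriv (deriv v) t + q t * v t)) := by
  have hv₁ : ContDiff ℝ 1 v := hv.of_le one_le_two
  have hv' : ContDiff ℝ 1 (deriv v) := hv.deriv'
  have hφ'cont : Continuous (deriv φ) := hφ.continuous_deriv le_rfl
  have hv''cont : Continuous (deriv (deriv v)) := hv'.continuous_deriv le_rfl
  have hH : ContDiff ℝ 1 (φ ^ 2 * (v * deriv v)) := (hφ.pow 2).mul (hv₁.mul hv')
  have hHc : HasCompactSupport (φ ^ 2 * (v * deriv v)) :=
    hφc.mono fun t ht hφt => ht (by simp [hφt])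
  have hH_int : Integrable (deriv (φ ^ 2 * (v * deriv v))) :=
    (hH.continuous_deriv le_rfl).integrable_of_hasCompactSupport hHc.deriv
  have hgrad_int : Integrable fun t => (deriv φ t * v t) ^ 2 :=
    ((hφ'cont.mul hv.continuous).pow 2).integrable_of_hasCompactSupport
      (hφc.deriv.mono fun t ht hφt => ht (by simp [hφt]))
  have hpot_int : Integrable fun t => φ t ^ 2 * (v t * (deriv (deriv v) t + q t * v t)) :=
    Continuous.integrable_of_hasCompactSupport
      ((hφ.continuous.pow 2).mul (hv.continuous.mul (hv''cont.add (hq.mul hv.continuous))))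
      (hφc.mono fun t ht hφt => ht (by simp [hφt]))
  simp only [indexForm, deriv_mul_sq_sub_eq (hφ.differentiable one_ne_zero)
    (hv₁.differentiable one_ne_zero) (hv'.differentiable one_ne_zero)]
  rw [integral_add hH_int (hgrad_int.sub' hpot_int),
    integral_deriv_eq_zero_of_hasCompactSupport hH hHc, zero_add,
    integral_sub hgrad_int hpot_int]

lemma contDiff_div_of_tsupport {n : WithTop ℕ∞} (hf : ContDiff ℝ n f) (hu : ContDiff ℝ n u)
    (hfu : ∀ t ∈ tsupport f, u t ≠ 0) : ContDiff ℝ n (f / u) := by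
  refine contDiff_iff_contDiffAt.2 fun t => ?_
  by_cases ht : t ∈ tsupport f
  · exact hf.contDiffAt.div hu.contDiffAt (hfu t ht)
  · have hzero : f / u =ᶠ[𝓝 t] fun _ => 0 := by
      filter_upwards [notMem_tsupport_iff_eventuallyEq.1 ht] with x hx
      simp [hx]
    exact contDiffAt_const.congr_of_eventuallyEq hzero

lemma indexForm_nonneg_of_supersolution (hq : Continuous q) (hu : ContDiff ℝ 2 u)
    (hf : ContDiff ℝ 1 f) (hfc : HasCompactSupport f) (hfu : ∀ t ∈ tsupport f, u t ≠ 0)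
    (hsuper : ∀ t ∈ tsupport f, u t * (deriv (deriv u) t + q t * u t) ≤ 0) :
    0 ≤ indexForm q f := by
  have hφ : ContDiff ℝ 1 (f / u) := contDiff_div_of_tsupport hf (hu.of_le one_le_two) hfu
  have hφc : HasCompactSupport (f / u) := hfc.mono fun t ht hft => ht (by simp [hft])
  have hfac : f / u * u = f := by
    ext t
    by_cases ht : f t = 0
    · simp [ht]
    · simp [hfu t (subset_tsupport f ht)]
  rw [← hfac, indexForm_mul hq hφ hφc hu, sub_nonneg]
  have hpot : ∀ t, (f / u) t ^ 2 * (u t * (deriv (deriv u) t + q t * u t)) ≤ 0 := fun t => by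
    by_cases ht : t ∈ tsupport f
    · exact mul_nonpos_of_nonneg_of_nonpos (sq_nonneg _) (hsuper t ht)
    · simp [image_eq_zero_of_notMem_tsupport ht]
  exact (integral_nonpos hpot).trans (integral_nonneg fun t => sq_nonneg _)

end IndexForm

section Cutoff

variable {q v χ : ℝ → ℝ} {a k M : ℝ}

lemma integral_sq_deriv_rescale_mul_le (hχ : ContDiff ℝ 1 χ) (hχc : HasCompactSupport χ)
    (hv : ∀ t, |v t| ≤ M) (hk : 0 < k) :
    ∫ t, (deriv (fun x => χ ((x - a) / k)) t * v t) ^ 2 ≤ M ^ 2 * (∫ t, deriv χ t ^ 2) / k := by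
  have hderiv : ∀ t, deriv (fun x => χ ((x - a) / k)) t = deriv χ ((t - a) / k) * (1 / k) :=
    fun t => ((hχ.differentiable one_ne_zero _).hasDerivAt.comp t
      (((hasDerivAt_id t).sub_const a).div_const k)).deriv
  have hχ'_int : Integrable fun t => deriv χ t ^ 2 :=
    ((hχ.continuous_deriv le_rfl).pow 2).integrable_of_hasCompactSupport
      (hχc.deriv.mono fun t ht hχt => ht (by simp [hχt]))
  have hle : ∀ t, (deriv (fun x => χ ((x - a) / k)) t * v t) ^ 2 ≤
      M ^ 2 / k ^ 2 * deriv χ ((t - a) / k) ^ 2 := fun t => by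
    have hvM : v t ^ 2 ≤ M ^ 2 := sq_le_sq.2 ((hv t).trans (le_abs_self M))
    calc (deriv (fun x => χ ((x - a) / k)) t * v t) ^ 2
        = v t ^ 2 / k ^ 2 * deriv χ ((t - a) / k) ^ 2 := by rw [hderiv]; ring
      _ ≤ M ^ 2 / k ^ 2 * deriv χ ((t - a) / k) ^ 2 := by gcongr
  calc ∫ t, (deriv (fun x => χ ((x - a) / k)) t * v t) ^ 2
      ≤ ∫ t, M ^ 2 / k ^ 2 * deriv χ ((t - a) / k) ^ 2 :=
        integral_mono_of_nonneg (ae_of_all _ fun t => sq_nonneg _)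
          (((hχ'_int.comp_div hk.ne').comp_sub_right a).const_mul _) (ae_of_all _ hle)
    _ = M ^ 2 / k ^ 2 * (k * ∫ t, deriv χ t ^ 2) := by
        rw [integral_const_mul, integral_sub_right_eq_self (fun t => deriv χ (t / k) ^ 2) a,
          Measure.integral_comp_div (fun t => deriv χ t ^ 2) k, abs_of_pos hk, smul_eq_mul]
    _ = M ^ 2 * (∫ t, deriv χ t ^ 2) / k := by field_simp

lemma contDiffBump_le_comp_div (χ : ContDiffBump (0 : ℝ)) (hk : χ.rOut / χ.rIn ≤ k) (t : ℝ) :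
    χ t ≤ χ (t / k) := by
  have hk0 : 0 < k := (div_pos χ.rOut_pos χ.rIn_pos).trans_le hk
  rcases le_total χ.rOut |t| with hfar | hnear
  · rw [χ.zero_of_le_dist (by simpa using hfar)]
    exact χ.nonneg
  · have hmem : t / k ∈ Metric.closedBall 0 χ.rIn := by
      rw [mem_closedBall_zero_iff, norm_eq_abs, abs_div, abs_of_pos hk0, div_le_iff₀ hk0]
      rw [div_le_iff₀ χ.rIn_pos] at hk
      linarith
    rw [χ.one_of_mem_closedBall hmem]
    exact χ.le_one

lemma hasCompactSupport_rescale (hχc : HasCompactSupport χ) (hk : k ≠ 0) :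
    HasCompactSupport fun t => χ ((t - a) / k) := by
  simpa [Function.comp_def, div_eq_mul_inv] using hχc.comp_homeomorph
    ((Homeomorph.subRight a).trans (Homeomorph.mulRight₀ k⁻¹ (inv_ne_zero hk)))

lemma exists_pos_le_integral_sq_rescale_mul (χ : ContDiffBump (0 : ℝ)) {P : ℝ → ℝ}
    (hP : Continuous P) (hP0 : ∀ t, 0 ≤ P t) (hPa : 0 < P a) :
    ∃ m > 0, ∀ k ≥ χ.rOut / χ.rIn, m ≤ ∫ t, χ ((t - a) / k) ^ 2 * P t := by
  have hcont : ∀ k, Continuous fun t => χ ((t - a) / k) ^ 2 * P t := fun k =>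
    ((χ.continuous.comp (by fun_prop)).pow 2).mul hP
  have hcpt : ∀ k, k ≠ 0 → HasCompactSupport fun t => χ ((t - a) / k) ^ 2 * P t := fun k hk =>
    (hasCompactSupport_rescale (a := a) χ.hasCompactSupport hk).mono
      fun t ht hχt => ht (by simp [hχt])
  refine ⟨∫ t, χ ((t - a) / 1) ^ 2 * P t, ?_, fun k hk => ?_⟩
  · refine (hcont 1).integral_pos_of_hasCompactSupport_nonneg_nonzero (x := a)
      (hcpt 1 one_ne_zero) (fun t => mul_nonneg (sq_nonneg _) (hP0 t)) ?_
    simpa [χ.eventuallyEq_one.eq_of_nhds] using hPa.ne'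
  · have hk0 : k ≠ 0 := (one_pos.trans (χ.one_lt_rOut_div_rIn.trans_le hk)).ne'
    refine integral_mono ((hcont 1).integrable_of_hasCompactSupport (hcpt 1 one_ne_zero))
      ((hcont k).integrable_of_hasCompactSupport (hcpt k hk0)) fun t => ?_
    have hmono : χ ((t - a) / 1) ≤ χ ((t - a) / k) := by
      simpa only [div_one] using contDiffBump_le_comp_div χ hk (t - a)
    exact mul_le_mul_of_nonneg_right (pow_le_pow_left₀ χ.nonneg hmono 2) (hP0 t)

lemma exists_indexForm_mul_neg_of_subsolution (hq : Continuous q) (hv : ContDiff ℝ 2 v)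
    (hvM : ∀ t, |v t| ≤ M) (hsub : ∀ t, 0 ≤ v t * (deriv (deriv v) t + q t * v t))
    (hpos : 0 < v a * (deriv (deriv v) a + q a * v a)) :
    ∃ φ : ℝ → ℝ, ContDiff ℝ (⊤ : ℕ∞) φ ∧ HasCompactSupport φ ∧ indexForm q (φ * v) < 0 := by
  let χ : ContDiffBump (0 : ℝ) := ⟨1, 2, one_pos, one_lt_two⟩
  have hP : Continuous fun t => v t * (deriv (deriv v) t + q t * v t) :=
    hv.continuous.mul ((hv.deriv'.continuous_deriv le_rfl).add (hq.mul hv.continuous))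
  obtain ⟨m, hm, hmle⟩ := exists_pos_le_integral_sq_rescale_mul χ hP hsub hpos
  obtain ⟨k, hk⟩ := exists_gt (max (χ.rOut / χ.rIn) (M ^ 2 * (∫ t, deriv χ t ^ 2) / m))
  obtain ⟨hkχ, hkm⟩ := max_lt_iff.1 hk
  have hk0 : 0 < k := one_pos.trans (χ.one_lt_rOut_div_rIn.trans hkχ)
  have hφ : ∀ {n : ℕ∞}, ContDiff ℝ n fun t => χ ((t - a) / k) :=
    χ.contDiff.comp (by fun_prop)
  have hφc : HasCompactSupport fun t => χ ((t - a) / k) :=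
    hasCompactSupport_rescale χ.hasCompactSupport hk0.ne'
  refine ⟨_, hφ, hφc, ?_⟩
  rw [indexForm_mul hq hφ hφc hv, sub_neg]
  calc ∫ t, (deriv (fun x => χ ((x - a) / k)) t * v t) ^ 2
      ≤ M ^ 2 * (∫ t, deriv χ t ^ 2) / k :=
        integral_sq_deriv_rescale_mul_le χ.contDiff χ.hasCompactSupport hvM hk0
    _ < m := (div_lt_comm₀ hm hk0).1 hkm
    _ ≤ ∫ t, χ ((t - a) / k) ^ 2 * (v t * (deriv (deriv v) t + q t * v t)) := hmle k hkχ.le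

end Cutoff

section Subsolution

/-- The function `y ↦ y e^{-1/y}`, extended by zero to `y ≤ 0`. It is a smooth convex
substitute for the positive part: composed with `1 + c u`, where `u'' + q u = 0` and `q ≥ 0`, it
yields a smooth subsolution vanishing where `1 + c u ≤ 0`. -/
noncomputable def flatRamp (y : ℝ) : ℝ :=
  y * expNegInvGlue y

lemma contDiff_flatRamp {n : ℕ∞} : ContDiff ℝ n flatRamp :=
  contDiff_id.mul expNegInvGlue.contDiff

lemma flatRamp_of_nonpos {y : ℝ} (hy : y ≤ 0) : flatRamp y = 0 := by
  simp [flatRamp, hy]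

lemma abs_flatRamp_le (y : ℝ) : |flatRamp y| ≤ |y| := by
  have hle : expNegInvGlue y ≤ 1 := by
    rcases le_or_gt y 0 with hy | hy
    · simp [expNegInvGlue.zero_of_nonpos hy]
    · simp [expNegInvGlue, hy.not_ge, hy.le]
  rw [flatRamp, abs_mul, abs_of_nonneg (expNegInvGlue.nonneg y)]
  exact mul_le_of_le_one_right (abs_nonneg y) hle

lemma hasDerivAt_expNegInvGlue (y : ℝ) :
    HasDerivAt expNegInvGlue (y⁻¹ ^ 2 * expNegInvGlue y) y := by
  simpa using expNegInvGlue.hasDerivAt_polynomial_eval_inv_mul 1 y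

lemma hasDerivAt_flatRamp (y : ℝ) :
    HasDerivAt flatRamp ((1 + y⁻¹) * expNegInvGlue y) y := by
  refine ((hasDerivAt_id y).mul (hasDerivAt_expNegInvGlue y)).congr_deriv ?_
  rcases eq_or_ne y 0 with rfl | hy
  · simp
  · simp only [id]
    field_simp

open Polynomial in
lemma hasDerivAt_deriv_flatRamp (y : ℝ) :
    HasDerivAt (deriv flatRamp) (y⁻¹ ^ 3 * expNegInvGlue y) y := by
  have hderiv : deriv flatRamp = fun y => (1 + X : ℝ[X]).eval y⁻¹ * expNegInvGlue y := by
    ext y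
    simp only [(hasDerivAt_flatRamp y).deriv, eval_add, eval_one, eval_X]
  rw [hderiv]
  refine (expNegInvGlue.hasDerivAt_polynomial_eval_inv_mul (1 + X) y).congr_deriv ?_
  simp only [eval_mul, eval_pow, eval_X, eval_sub, eval_add, eval_one, eval_zero,
    derivative_add, derivative_one, derivative_X]
  ring

lemma flatRamp_comp_mul_jacobi {q u : ℝ → ℝ} {t : ℝ} (hu : ContDiff ℝ 2 u)
    (hjac : deriv (deriv u) t + q t * u t = 0) (c : ℝ) :
    flatRamp (1 + c * u t) * (deriv (deriv fun x => flatRamp (1 + c * u x)) t +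
        q t * flatRamp (1 + c * u t)) =
      expNegInvGlue (1 + c * u t) ^ 2 * ((c * deriv u t / (1 + c * u t)) ^ 2 + q t) := by
  have hy : ∀ x, HasDerivAt (fun x => 1 + c * u x) (c * deriv u x) x := fun x =>
    ((hu.differentiable two_ne_zero x).hasDerivAt.const_mul c).const_add 1
  have hy' : HasDerivAt (fun x => c * deriv u x) (c * -(q t * u t)) t := by
    rw [← eq_neg_of_add_eq_zero_left hjac]
    exact (hu.deriv'.differentiable one_ne_zero t).hasDerivAt.const_mul c
  have hderiv : deriv (fun x => flatRamp (1 + c * u x)) =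
      fun x => deriv flatRamp (1 + c * u x) * (c * deriv u x) := funext fun x => by
    rw [(hasDerivAt_flatRamp _).deriv]
    exact ((hasDerivAt_flatRamp _).comp x (hy x)).deriv
  have hderiv2 : HasDerivAt (fun x => deriv flatRamp (1 + c * u x) * (c * deriv u x)) _ t :=
    ((hasDerivAt_deriv_flatRamp _).comp t (hy t)).mul hy'
  rw [hderiv, hderiv2.deriv, Function.comp_apply, (hasDerivAt_flatRamp _).deriv, flatRamp]
  rcases eq_or_ne (1 + c * u t) 0 with h0 | h0
  · simp [h0]
  · field_simp
    ring

lemma exists_indexForm_neg_tsupport_subset {q u : ℝ → ℝ} {a c M : ℝ} (hq : Continuous q)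
    (hq0 : ∀ t, 0 ≤ q t) (hu : ContDiff ℝ (⊤ : ℕ∞) u) (huM : ∀ t, |u t| ≤ M)
    (hjac : ∀ t, deriv (deriv u) t + q t * u t = 0) (hc : c ≠ 0) (hua : 0 < 1 + c * u a)
    (hu'a : deriv u a ≠ 0) :
    ∃ g : ℝ → ℝ, ContDiff ℝ (⊤ : ℕ∞) g ∧ HasCompactSupport g ∧
      tsupport g ⊆ closure {t | 0 < 1 + c * u t} ∧ indexForm q g < 0 := by
  let v : ℝ → ℝ := fun t => flatRamp (1 + c * u t)
  have hv : ContDiff ℝ (⊤ : ℕ∞) v :=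
    contDiff_flatRamp.comp (contDiff_const.add (contDiff_const.mul hu))
  have hvM : ∀ t, |v t| ≤ 1 + |c| * M := fun t =>
    calc |v t| ≤ |1 + c * u t| := abs_flatRamp_le _
      _ ≤ |1| + |c * u t| := abs_add_le _ _
      _ ≤ 1 + |c| * M := by rw [abs_one, abs_mul]; gcongr; exact huM t
  have hvsupp : Function.support v ⊆ {t | 0 < 1 + c * u t} := fun t ht =>
    lt_of_not_ge fun h => ht (flatRamp_of_nonpos h)
  have hpot : ∀ t, v t * (deriv (deriv v) t + q t * v t) =
      expNegInvGlue (1 + c * u t) ^ 2 * ((c * deriv u t / (1 + c * u t)) ^ 2 + q t) := fun t =>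
    flatRamp_comp_mul_jacobi (by exact_mod_cast contDiff_infty.1 hu 2) (hjac t) c
  have hsub : ∀ t, 0 ≤ v t * (deriv (deriv v) t + q t * v t) := fun t => by
    rw [hpot]
    exact mul_nonneg (sq_nonneg _) (add_nonneg (sq_nonneg _) (hq0 t))
  have hpos : 0 < v a * (deriv (deriv v) a + q a * v a) := by
    rw [hpot]
    exact mul_pos (pow_pos (expNegInvGlue.pos_of_pos hua) 2) (add_pos_of_pos_of_nonneg
      (sq_pos_of_ne_zero (div_ne_zero (mul_ne_zero hc hu'a) hua.ne')) (hq0 a))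
  obtain ⟨φ, hφ, hφc, hneg⟩ := exists_indexForm_mul_neg_of_subsolution hq
    (by exact_mod_cast contDiff_infty.1 hv 2) hvM hsub hpos
  have hφv : Function.support (φ * v) ⊆ Function.support v := fun t ht hvt => ht (by simp [hvt])
  exact ⟨φ * v, hφ.mul hv, hφc.mul_right, closure_mono (hφv.trans hvsupp), hneg⟩

end Subsolution

section Tanh

lemma hasDerivAt_tanh (t : ℝ) : HasDerivAt tanh ((cosh t ^ 2)⁻¹) t := by
  rw [funext tanh_eq_sinh_div_cosh]
  refine ((hasDerivAt_sinh t).div (hasDerivAt_cosh t) (cosh_pos t).ne').congr_deriv ?_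
  rw [← sq, ← sq, cosh_sq_sub_sinh_sq, one_div]

lemma deriv_tanh : deriv tanh = fun t => (cosh t ^ 2)⁻¹ :=
  funext fun t => (hasDerivAt_tanh t).deriv

lemma contDiff_tanh {n : WithTop ℕ∞} : ContDiff ℝ n tanh := by
  rw [funext tanh_eq_sinh_div_cosh]
  exact contDiff_sinh.div contDiff_cosh fun t => (cosh_pos t).ne'

lemma deriv_deriv_tanh_add (t : ℝ) :
    deriv (deriv tanh) t + 2 * (cosh t ^ 2)⁻¹ * tanh t = 0 := by
  have hcosh : cosh t ≠ 0 := (cosh_pos t).ne'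
  have hderiv : HasDerivAt (fun x => (cosh x ^ 2)⁻¹) _ t :=
    ((hasDerivAt_cosh t).pow 2).inv (pow_ne_zero 2 hcosh)
  rw [deriv_tanh, hderiv.deriv, tanh_eq_sinh_div_cosh]
  simp only [Pi.pow_apply]
  field_simp
  push_cast
  ring

end Tanh

theorem stmt3_general {q u : ℝ → ℝ} {a M : ℝ} (hq : Continuous q) (hq0 : ∀ t, 0 ≤ q t)
    (hu : ContDiff ℝ (⊤ : ℕ∞) u) (huM : ∀ t, |u t| ≤ M) (hu' : ∀ t, 0 < deriv u t)
    (hjac : ∀ t, deriv (deriv u) t + q t * u t = 0) (hua : u a = 0) :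
    (∀ f : ℝ → ℝ, ContDiff ℝ 1 f → HasCompactSupport f → tsupport f ⊆ Ioi a →
      0 ≤ ∫ t in Ioi a, (deriv f t ^ 2 - q t * f t ^ 2)) ∧
    (∀ b < a, ∃ g : ℝ → ℝ, ContDiff ℝ (⊤ : ℕ∞) g ∧ HasCompactSupport g ∧
      tsupport g ⊆ Ioi b ∧ ∫ t, (deriv g t ^ 2 - q t * g t ^ 2) < 0) := by
  have hmono : StrictMono u := strictMono_of_deriv_pos hu'
  have hu2 : ContDiff ℝ 2 u := by exact_mod_cast contDiff_infty.1 hu 2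
  refine ⟨fun f hf hfc hfs => ?_, fun b hb => ?_⟩
  · rw [setIntegral_eq_indexForm hfs]
    refine indexForm_nonneg_of_supersolution hq hu2 hf hfc (fun t ht => ?_) fun t _ => ?_
    · exact (hua.symm.trans_lt (hmono (hfs ht))).ne'
    · rw [hjac, mul_zero]
  · obtain ⟨s, hbs, hsa⟩ := exists_between hb
    have hus : u s < 0 := hua ▸ hmono hsa
    obtain ⟨g, hg, hgc, hgs, hneg⟩ := exists_indexForm_neg_tsupport_subset (a := a)
      (c := -(u s)⁻¹) hq hq0 hu huM hjac (neg_ne_zero.2 (inv_ne_zero hus.ne)) (by simp [hua])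
      (hu' a).ne'
    refine ⟨g, hg, hgc, hgs.trans ((closure_minimal (fun t ht => ?_) isClosed_Ici).trans
      (Ici_subset_Ioi.2 hbs)), hneg⟩
    have hlevel : u t / u s < 1 := by simpa [div_eq_inv_mul] using ht
    exact (hmono.lt_iff_lt.1 ((div_lt_one_of_neg hus).1 hlevel)).le

/-- Lindelöf's property for the Euclidean catenoid: the upper half-catenoid `t > 0` is weakly
stable, while every strictly larger rotation-invariant domain `t > −δ` is unstable. -/
theorem stmt3 :
    (∀ f : ℝ → ℝ, ContDiff ℝ (⊤ : ℕ∞) f → HasCompactSupport f →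
      tsupport f ⊆ Set.Ioi (0:ℝ) →
      0 ≤ ∫ t in Set.Ioi (0:ℝ), ((deriv f t) ^ 2 - 2 * (Real.cosh t ^ 2)⁻¹ * (f t) ^ 2)) ∧
    (∀ δ : ℝ, 0 < δ → ∃ g : ℝ → ℝ, ContDiff ℝ (⊤ : ℕ∞) g ∧ HasCompactSupport g ∧
      tsupport g ⊆ Set.Ioi (-δ) ∧
      (∫ t : ℝ, ((deriv g t) ^ 2 - 2 * (Real.cosh t ^ 2)⁻¹ * (g t) ^ 2)) < 0) := by
  have h := stmt3_general (a := 0) (M := 1) (q := fun t => 2 * (cosh t ^ 2)⁻¹)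
    (by fun_prop (disch := intro; positivity)) (fun t => by positivity) contDiff_tanh
    (fun t => (abs_tanh_lt_one t).le) (fun t => by rw [deriv_tanh]; positivity)
    deriv_deriv_tanh_add tanh_zero
  exact ⟨fun f hf => h.1 f (hf.of_le (by exact_mod_cast le_top)),
    fun δ hδ => h.2 (-δ) (neg_lt_zero.2 hδ)⟩
end

section
/- Let n ≥ 2, a > 0, T(a) = sinh^{n−1}(a)·∫_a^∞(sinh^{2n−2}(u) − sinh^{2n−2}(a))^{−1/2}du, and let f = f(a,·) : (−T(a), T(a)) → ℝ be the maximal even solution of sinh(f)f'' = (n−1)cosh(f)(1+f'²), f(0) = a, f'(0) = 0. For t ≥ 0, define v(a,t) = (1 − (sinh(a)/sinh(f(a,t)))^{2n−2})^{1/2}, e₀(a,t) = (cosh(a)/cosh(f(a,t)))·(sinh(a)/sinh(f(a,t)))^{n−2}, e₁(a,t) = cosh(a)·∫₁^{sinh(f(a,t))/sinh(a)} (u^{2n−2} − 1)^{−1/2}·(sinh²(a)·u² + 1)^{−3/2} du, e(a,t) = −e₀(a,t) + v(a,t)·e₁(a,t), and E(a) = cosh(a)·∫₁^∞ (u^{2n−2}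 − 1)^{−1/2}·(sinh²(a)·u² + 1)^{−3/2} du. Then: (1) E(a) is finite and positive; (2) v(a,·) vanishes only at t = 0 and v(a,t) → 1 as t → T(a); (3) e(a,·) satisfies e(a,0) = −1 and has exactly one zero z(a) in (0, T(a)); (4) the function y(a,t) = e(a,t) + E(a)·v(a,t) has exactly one zero ℓ(a) in (0, T(a)), and ℓ(a) ∈ (0, z(a)). -/
open Real MeasureTheory Set Filter Topology

/-! The profile equation has the first integral `(1 + f'²) sinh(a)^(2n-2) = sinh(f)^(2n-2)`, so that
for `t ≥ 0` the height `t` is the explicit function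
`sinh(a)^(n-1) ∫_a^f (sinh(u)^(2n-2) - sinh(a)^(2n-2))^(-1/2) du` of the radius `f`. Hence `f` maps
`(0, T(a))` increasingly onto `(a, ∞)`, and the Jacobi fields can be studied as functions of the
radius. There `v` increases from `0` to `1`, `e₀` decreases from `1` to `0` and `e₁` increases from
`0` to `E(a)`; so `e = -e₀ + v e₁` increases from `-1` to `E(a) > 0`, and `e + E(a) v` is
increasing, negative at `a` and positive at the zero of `e`.

Both improper integrals converge by comparison with the derivative of `arccos ((c / w)^k)`. -/

namespace Catenoid

/-! ### Integrals over half-lines -/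

section Primitive

variable {g : ℝ → ℝ} {a : ℝ}

lemma continuousOn_Ici_integral (hg : IntegrableOn g (Ioi a)) :
    ContinuousOn (fun x ↦ ∫ u in a..x, g u) (Ici a) :=
  (continuousOn_const.sub hg.continuousOn_Ici_primitive_Ioi).congr fun _ hx ↦
    eq_sub_of_add_eq <|
      intervalIntegral.integral_interval_add_Ioi hg (hg.mono_set (Ioi_subset_Ioi hx))

lemma strictMonoOn_Ici_integral (hg : IntegrableOn g (Ioi a)) (hpos : ∀ u ∈ Ioi a, 0 < g u) :
    StrictMonoOn (fun x ↦ ∫ u in a..x, g u) (Ici a) := by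
  intro x hx y _ hxy
  have hint {p q : ℝ} (hp : a ≤ p) (hpq : p ≤ q) : IntervalIntegrable g volume p q :=
    (intervalIntegrable_iff_integrableOn_Ioc_of_le hpq).2
      (hg.mono_set fun u hu ↦ hp.trans_lt hu.1)
  have hadd := intervalIntegral.integral_add_adjacent_intervals (hint le_rfl hx) (hint hx hxy.le)
  have hxy_pos : 0 < ∫ u in x..y, g u :=
    intervalIntegral.intervalIntegral_pos_of_pos_on (hint hx hxy.le)
      (fun u hu ↦ hpos u (lt_of_le_of_lt hx hu.1)) hxy
  simp only
  linarith

lemma intervalIntegral_lt_integral_Ioi (hg : IntegrableOn g (Ioi a))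
    (hpos : ∀ u ∈ Ioi a, 0 < g u) {x : ℝ} (hx : a ≤ x) :
    ∫ u in a..x, g u < ∫ u in Ioi a, g u := by
  have hmono := strictMonoOn_Ici_integral hg hpos
  refine (hmono hx (mem_Ici.2 (by linarith)) (lt_add_one x)).trans_le ?_
  refine ge_of_tendsto (intervalIntegral_tendsto_integral_Ioi a hg tendsto_id) ?_
  filter_upwards [eventually_ge_atTop (x + 1)] with y hy
  exact hmono.monotoneOn (mem_Ici.2 (by linarith)) (mem_Ici.2 (by simp only [id]; linarith)) hy

end Primitive

lemma rpow_neg_one_div_two {x : ℝ} (hx : 0 ≤ x) : x ^ (-(1 : ℝ) / 2) = (√x)⁻¹ := by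
  rw [neg_div, rpow_neg hx, sqrt_eq_rpow]

lemma hasDerivAt_arccos_div_pow {w : ℝ → ℝ} {c w' x : ℝ} {k : ℕ} (hk : k ≠ 0) (hc : 0 < c)
    (hcw : c < w x) (hw : HasDerivAt w w' x) :
    HasDerivAt (fun y ↦ arccos ((c / w y) ^ k))
      (k * c ^ k * (w' / (w x * √(w x ^ (2 * k) - c ^ (2 * k))))) x := by
  have hw_pos : 0 < w x := hc.trans hcw
  have hq_pos : 0 < (c / w x) ^ k := by positivity
  have hq_lt : (c / w x) ^ k < 1 :=
    pow_lt_one₀ (by positivity) ((div_lt_one hw_pos).2 hcw) hk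
  have hsub : 0 < w x ^ (2 * k) - c ^ (2 * k) :=
    sub_pos.2 (pow_lt_pow_left₀ hcw hc.le (by positivity))
  have hsqrt : √(1 - ((c / w x) ^ k) ^ 2) = √(w x ^ (2 * k) - c ^ (2 * k)) / w x ^ k := by
    have hone : 1 - ((c / w x) ^ k) ^ 2 = (w x ^ (2 * k) - c ^ (2 * k)) / (w x ^ k) ^ 2 := by
      rw [div_pow]
      field_simp
      ring
    rw [hone, sqrt_div hsub.le, sqrt_sq (by positivity)]
  have hquot := ((hasDerivAt_const x c).div hw hw_pos.ne').pow k
  refine ((hasDerivAt_arccos (by linarith) hq_lt.ne).comp x hquot).congr_deriv ?_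
  obtain ⟨j, rfl⟩ := Nat.exists_eq_succ_of_ne_zero hk
  have := sqrt_pos.2 hsub
  rw [hsqrt, Pi.div_apply, div_pow, Nat.succ_eq_add_one, Nat.add_sub_cancel]
  field_simp
  ring

lemma integrableOn_Ioi_deriv_div_mul_sqrt {w w' : ℝ → ℝ} {a : ℝ} {k : ℕ} (hk : k ≠ 0)
    (ha : 0 < w a) (hcont : ContinuousWithinAt w (Ici a) a)
    (hderiv : ∀ x ∈ Ioi a, HasDerivAt w (w' x) x) (hnonneg : ∀ x ∈ Ioi a, 0 ≤ w' x)
    (hlt : ∀ x ∈ Ioi a, w a < w x) (htop : Tendsto w atTop atTop) :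
    IntegrableOn (fun x ↦ w' x / (w x * √(w x ^ (2 * k) - w a ^ (2 * k)))) (Ioi a) := by
  have hC : (k * w a ^ k : ℝ) ≠ 0 := by positivity
  refine (integrable_const_mul_iff (isUnit_iff_ne_zero.2 hC) _).1 ?_
  refine integrableOn_Ioi_deriv_of_nonneg
    (g := fun x ↦ arccos ((w a / w x) ^ k)) (l := arccos (0 ^ k)) ?_
    (fun x hx ↦ hasDerivAt_arccos_div_pow hk ha (hlt x hx) (hderiv x hx)) (fun x hx ↦ ?_) ?_
  · exact continuous_arccos.continuousAt.comp_continuousWithinAt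
      ((continuousWithinAt_const.div hcont ha.ne').pow k)
  · have := ha.trans (hlt x hx)
    have := hnonneg x hx
    positivity
  · exact (continuous_arccos.tendsto _).comp ((htop.const_div_atTop _).pow k)

lemma tendsto_sinh_atTop : Tendsto sinh atTop atTop :=
  tendsto_atTop_mono' _ ((eventually_ge_atTop 0).mono fun _ ↦ self_le_sinh_iff.2) tendsto_id

lemma tendsto_cosh_atTop : Tendsto cosh atTop atTop :=
  tendsto_atTop_mono (fun x ↦ (sinh_lt_cosh x).le) tendsto_sinh_atTop

/-! ### The height as a function of the radius -/

section Height

/-- The derivative of the height with respect to the radius `u`, up to the factor `sinh(a)^k`, on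
the catenoid of dimension `n = k + 1` and neck radius `a`. -/
noncomputable def heightKernel (k : ℕ) (a u : ℝ) : ℝ :=
  (sinh u ^ (2 * k) - sinh a ^ (2 * k)) ^ (-(1 : ℝ) / 2)

/-- The height at which the catenoid of dimension `k + 1` and neck radius `a` has radius `r`, the
inverse of the profile function on the upper half. -/
noncomputable def height (k : ℕ) (a r : ℝ) : ℝ :=
  sinh a ^ k * ∫ u in a..r, heightKernel k a u

/-- The number `T(a)`, half of the total height of the catenoid of dimension `k + 1` and neck
radius `a`. -/
noncomputable def halfHeight (k : ℕ) (a : ℝ) : ℝ :=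
  sinh a ^ k * ∫ u in Ioi a, heightKernel k a u

variable {k : ℕ} {a r : ℝ}

lemma sinh_pow_sub_sinh_pow_pos (hk : k ≠ 0) (ha : 0 < a) (hr : a < r) :
    0 < sinh r ^ (2 * k) - sinh a ^ (2 * k) :=
  sub_pos.2 <| pow_lt_pow_left₀ (sinh_lt_sinh.2 hr) (sinh_pos_iff.2 ha).le (by positivity)

lemma heightKernel_pos (hk : k ≠ 0) (ha : 0 < a) (hr : a < r) : 0 < heightKernel k a r :=
  rpow_pos_of_pos (sinh_pow_sub_sinh_pow_pos hk ha hr) _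

lemma continuousOn_heightKernel (hk : k ≠ 0) (ha : 0 < a) :
    ContinuousOn (heightKernel k a) (Ioi a) :=
  ContinuousOn.rpow_const (by fun_prop) fun _ hu ↦
    Or.inl (sinh_pow_sub_sinh_pow_pos hk ha hu).ne'

lemma integrableOn_heightKernel (hk : k ≠ 0) (ha : 0 < a) :
    IntegrableOn (heightKernel k a) (Ioi a) := by
  have hbound := integrableOn_Ioi_deriv_div_mul_sqrt (w := sinh) (w' := cosh) hk
    (sinh_pos_iff.2 ha) continuous_sinh.continuousWithinAt (fun x _ ↦ hasDerivAt_sinh x)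
    (fun x _ ↦ (cosh_pos x).le) (fun x hx ↦ sinh_lt_sinh.2 hx) tendsto_sinh_atTop
  refine hbound.mono' ((continuousOn_heightKernel hk ha).aestronglyMeasurable measurableSet_Ioi) ?_
  refine (ae_restrict_mem measurableSet_Ioi).mono fun u hu ↦ ?_
  have hsinh : 0 < sinh u := sinh_pos_iff.2 (ha.trans hu)
  have hle : 1 ≤ cosh u / sinh u := (one_le_div hsinh).2 (sinh_lt_cosh u).le
  rw [norm_of_nonneg (heightKernel_pos hk ha hu).le, heightKernel,
    rpow_neg_one_div_two (sinh_pow_sub_sinh_pow_pos hk ha hu).le, ← div_div, div_eq_mul_inv (_ / _)]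
  exact le_mul_of_one_le_left (by positivity) hle

lemma continuousOn_height (hk : k ≠ 0) (ha : 0 < a) : ContinuousOn (height k a) (Ici a) :=
  continuousOn_const.mul (continuousOn_Ici_integral (integrableOn_heightKernel hk ha))

lemma strictMonoOn_height (hk : k ≠ 0) (ha : 0 < a) : StrictMonoOn (height k a) (Ici a) :=
  fun _ hx _ hy hxy ↦ mul_lt_mul_of_pos_left
    (strictMonoOn_Ici_integral (integrableOn_heightKernel hk ha)
      (fun _ ↦ heightKernel_pos hk ha) hx hy hxy)
    (pow_pos (sinh_pos_iff.2 ha) k)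

lemma height_self : height k a a = 0 := by
  simp [height]

lemma height_lt_halfHeight (hk : k ≠ 0) (ha : 0 < a) (hr : a ≤ r) :
    height k a r < halfHeight k a :=
  mul_lt_mul_of_pos_left
    (intervalIntegral_lt_integral_Ioi (integrableOn_heightKernel hk ha)
      (fun _ ↦ heightKernel_pos hk ha) hr)
    (pow_pos (sinh_pos_iff.2 ha) k)

lemma halfHeight_pos (hk : k ≠ 0) (ha : 0 < a) : 0 < halfHeight k a :=
  height_self.symm.trans_lt (height_lt_halfHeight hk ha le_rfl)

lemma hasDerivAt_height (hk : k ≠ 0) (ha : 0 < a) (hr : a < r) :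
    HasDerivAt (height k a) (sinh a ^ k * heightKernel k a r) r := by
  have hcont := continuousOn_heightKernel hk ha
  refine (intervalIntegral.integral_hasDerivAt_right ?_
    (hcont.stronglyMeasurableAtFilter isOpen_Ioi r hr)
    (hcont.continuousAt (Ioi_mem_nhds hr))).const_mul _
  exact (intervalIntegrable_iff_integrableOn_Ioc_of_le hr.le).2
    ((integrableOn_heightKernel hk ha).mono_set Ioc_subset_Ioi_self)

end Height

/-! ### The profile function -/

/-- The generating curve `f` of the catenoid of dimension `n = k + 1` and neck radius `a`, on the
height interval `(-T, T)`: a `C²` solution of the minimal surface equation that crosses the slice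
`t = 0` orthogonally at radius `a`. -/
structure IsProfile (k : ℕ) (a T : ℝ) (f : ℝ → ℝ) : Prop where
  contDiffOn : ContDiffOn ℝ 2 f (Ioo (-T) T)
  apply_zero : f 0 = a
  deriv_zero : deriv f 0 = 0
  ode : ∀ t ∈ Ioo (-T) T,
    sinh (f t) * deriv (deriv f) t = k * cosh (f t) * (1 + deriv f t ^ 2)

namespace IsProfile

variable {k : ℕ} {a T t : ℝ} {f : ℝ → ℝ}

lemma Ico_subset : Ico 0 T ⊆ Ioo (-T) T :=
  fun _ ht ↦ ⟨by linarith [ht.1, ht.2], ht.2⟩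

lemma zero_mem_Ioo (ht : t ∈ Ioo (-T) T) : (0 : ℝ) ∈ Ioo (-T) T :=
  ⟨by linarith [ht.1, ht.2], by linarith [ht.1, ht.2]⟩

lemma hasDerivAt (hf : IsProfile k a T f) (ht : t ∈ Ioo (-T) T) :
    HasDerivAt f (deriv f t) t :=
  ((hf.contDiffOn.differentiableOn (by norm_num)).differentiableAt
    (isOpen_Ioo.mem_nhds ht)).hasDerivAt

lemma hasDerivAt_deriv (hf : IsProfile k a T f) (ht : t ∈ Ioo (-T) T) :
    HasDerivAt (deriv f) (deriv (deriv f) t) t :=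
  (((hf.contDiffOn.deriv_of_isOpen (m := 1) isOpen_Ioo (by norm_num)).differentiableOn
    (by norm_num)).differentiableAt (isOpen_Ioo.mem_nhds ht)).hasDerivAt

lemma continuousOn_Ico (hf : IsProfile k a T f) : ContinuousOn f (Ico 0 T) :=
  hf.contDiffOn.continuousOn.mono Ico_subset

lemma pos (hf : IsProfile k a T f) (hk : k ≠ 0) (ha : 0 < a) (ht : t ∈ Ioo (-T) T) :
    0 < f t := by
  by_contra! hneg
  obtain ⟨x, hx, hx0⟩ := isPreconnected_Ioo.intermediate_value ht (zero_mem_Ioo ht)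
    hf.contDiffOn.continuousOn ⟨hneg, ha.le.trans_eq hf.apply_zero.symm⟩
  have hode := hf.ode x hx
  rw [hx0, sinh_zero, cosh_zero, zero_mul] at hode
  exact absurd hode (by positivity)

lemma deriv_deriv_pos (hf : IsProfile k a T f) (hk : k ≠ 0) (ha : 0 < a)
    (ht : t ∈ Ioo (-T) T) : 0 < deriv (deriv f) t := by
  have := cosh_pos (f t)
  refine pos_of_mul_pos_right ?_ (sinh_pos_iff.2 (hf.pos hk ha ht)).le
  rw [hf.ode t ht]
  positivity

lemma deriv_pos (hf : IsProfile k a T f) (hk : k ≠ 0) (ha : 0 < a) (ht : t ∈ Ioo 0 T) :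
    0 < deriv f t := by
  have hmem := Ico_subset (Ioo_subset_Ico_self ht)
  have hmono : StrictMonoOn (deriv f) (Ioo (-T) T) :=
    strictMonoOn_of_deriv_pos (convex_Ioo _ _)
      (fun x hx ↦ (hf.hasDerivAt_deriv hx).continuousAt.continuousWithinAt)
      (by simpa only [interior_Ioo] using fun x ↦ hf.deriv_deriv_pos hk ha)
  exact hf.deriv_zero.symm.trans_lt (hmono (zero_mem_Ioo hmem) hmem ht.1)

lemma strictMonoOn_Ico (hf : IsProfile k a T f) (hk : k ≠ 0) (ha : 0 < a) :
    StrictMonoOn f (Ico 0 T) :=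
  strictMonoOn_of_deriv_pos (convex_Ico _ _) hf.continuousOn_Ico
    (by simpa only [interior_Ico] using fun x ↦ hf.deriv_pos hk ha)

lemma lt_apply (hf : IsProfile k a T f) (hk : k ≠ 0) (ha : 0 < a) (ht : t ∈ Ioo 0 T) :
    a < f t :=
  hf.apply_zero.symm.trans_lt <|
    hf.strictMonoOn_Ico hk ha (left_mem_Ico.2 (ht.1.trans ht.2)) (Ioo_subset_Ico_self ht) ht.1

lemma le_apply (hf : IsProfile k a T f) (hk : k ≠ 0) (ha : 0 < a) (ht : t ∈ Ico 0 T) :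
    a ≤ f t :=
  hf.apply_zero.symm.trans_le <|
    (hf.strictMonoOn_Ico hk ha).monotoneOn (left_mem_Ico.2 (ht.1.trans_lt ht.2)) ht ht.1

lemma first_integral (hf : IsProfile k a T f) (hk : k ≠ 0) (ha : 0 < a) (ht : t ∈ Ioo (-T) T) :
    (1 + deriv f t ^ 2) * sinh a ^ (2 * k) = sinh (f t) ^ (2 * k) := by
  have hsinh {x : ℝ} (hx : x ∈ Ioo (-T) T) : 0 < sinh (f x) := sinh_pos_iff.2 (hf.pos hk ha hx)
  have hderiv {x : ℝ} (hx : x ∈ Ioo (-T) T) :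
      HasDerivAt (fun x ↦ (1 + deriv f x ^ 2) / sinh (f x) ^ (2 * k)) 0 x := by
    refine ((((hf.hasDerivAt_deriv hx).pow 2).const_add 1).div
      ((hf.hasDerivAt hx).sinh.pow (2 * k)) (pow_pos (hsinh hx) _).ne').congr_deriv ?_
    obtain ⟨j, rfl⟩ := Nat.exists_eq_succ_of_ne_zero hk
    have hode := hf.ode x hx
    rw [div_eq_zero_iff]
    left
    simp only [Pi.pow_apply, Nat.succ_eq_add_one, show 2 * (j + 1) - 1 = 2 * j + 1 by lia] at hode ⊢
    push_cast at hode ⊢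
    linear_combination (2 * deriv f x * sinh (f x) ^ (2 * j + 1)) * hode
  have hconst := isOpen_Ioo.is_const_of_deriv_eq_zero isPreconnected_Ioo
    (fun x hx ↦ (hderiv hx).differentiableAt.differentiableWithinAt)
    (fun x hx ↦ (hderiv hx).deriv) ht (zero_mem_Ioo ht)
  simp only [hf.apply_zero, hf.deriv_zero] at hconst
  have := hsinh ht
  have := sinh_pos_iff.2 ha
  field_simp at hconst
  linear_combination hconst

lemma heightKernel_apply (hf : IsProfile k a T f) (hk : k ≠ 0) (ha : 0 < a) (ht : t ∈ Ioo 0 T) :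
    heightKernel k a (f t) = (deriv f t * sinh a ^ k)⁻¹ := by
  have hsq : sinh (f t) ^ (2 * k) - sinh a ^ (2 * k) = (deriv f t * sinh a ^ k) ^ 2 := by
    rw [← hf.first_integral hk ha (Ico_subset (Ioo_subset_Ico_self ht))]
    ring
  have := hf.deriv_pos hk ha ht
  have := sinh_pos_iff.2 ha
  rw [heightKernel, hsq, rpow_neg_one_div_two (sq_nonneg _), sqrt_sq (by positivity)]

lemma height_apply (hf : IsProfile k a T f) (hk : k ≠ 0) (ha : 0 < a) (ht : t ∈ Ico 0 T) :
    height k a (f t) = t := by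
  have hsub : Icc 0 t ⊆ Ico 0 T := Icc_subset_Ico_right ht.2
  have hderiv : ∀ x ∈ Ioo 0 t, HasDerivAt (height k a ∘ f) 1 x := by
    intro x hx
    have hxT : x ∈ Ioo 0 T := ⟨hx.1, hx.2.trans ht.2⟩
    refine ((hasDerivAt_height hk ha (hf.lt_apply hk ha hxT)).comp x
      (hf.hasDerivAt (Ico_subset (Ioo_subset_Ico_self hxT)))).congr_deriv ?_
    have := hf.deriv_pos hk ha hxT
    have := sinh_pos_iff.2 ha
    rw [hf.heightKernel_apply hk ha hxT]
    field_simp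
  have hftc := intervalIntegral.integral_eq_sub_of_hasDerivAt_of_le ht.1
    ((continuousOn_height hk ha).comp (hf.continuousOn_Ico.mono hsub)
      fun x hx ↦ hf.le_apply hk ha (hsub hx)) hderiv intervalIntegrable_const
  simpa [hf.apply_zero, height_self] using hftc.symm

lemma tendsto_atTop (hf : IsProfile k a (halfHeight k a) f) (hk : k ≠ 0) (ha : 0 < a) :
    Tendsto f (𝓝[<] halfHeight k a) atTop := by
  refine Filter.tendsto_atTop.2 fun M ↦ ?_
  have hlt := max_lt (halfHeight_pos hk ha) (height_lt_halfHeight hk ha (le_max_left a M))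
  filter_upwards [Ioo_mem_nhdsLT hlt] with t ht
  have htT : t ∈ Ico 0 (halfHeight k a) := ⟨(le_max_left _ _).trans ht.1.le, ht.2⟩
  have hheight : height k a (max a M) < height k a (f t) := by
    rw [hf.height_apply hk ha htT]
    exact (le_max_right _ _).trans_lt ht.1
  exact (le_max_right a M).trans <| le_of_lt <|
    ((strictMonoOn_height hk ha).lt_iff_lt (le_max_left a M) (hf.le_apply hk ha htT)).1 hheight

lemma surjOn_Ioi (hf : IsProfile k a (halfHeight k a) f) (hk : k ≠ 0) (ha : 0 < a) :
    SurjOn f (Ioo 0 (halfHeight k a)) (Ioi a) := by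
  intro r hr
  obtain ⟨b, hrb, hb⟩ := ((hf.tendsto_atTop hk ha).eventually_gt_atTop r |>.and
    (Ioo_mem_nhdsLT (halfHeight_pos hk ha))).exists
  obtain ⟨t, ht, rfl⟩ := intermediate_value_Ioo hb.1.le
    (hf.continuousOn_Ico.mono (Icc_subset_Ico_right hb.2))
    ⟨hf.apply_zero.trans_lt hr, hrb⟩
  exact ⟨t, ⟨ht.1, ht.2.trans hb.2⟩, rfl⟩

end IsProfile

/-! ### Jacobi fields as functions of the radius -/

/-- The vertical Jacobi field `v` as a function of the radius `r = f(a, t)`. -/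
noncomputable def vertical (k : ℕ) (a r : ℝ) : ℝ :=
  √(1 - (sinh a / sinh r) ^ (2 * k))

/-- The integrand in `e₁` and `E(a)`. -/
noncomputable def variationKernel (k : ℕ) (a u : ℝ) : ℝ :=
  (u ^ (2 * k) - 1) ^ (-(1 : ℝ) / 2) * (sinh a ^ 2 * u ^ 2 + 1) ^ (-(3 : ℝ) / 2)

/-- The term `e₀` of the variation Jacobi field as a function of the radius `r = f(a, t)`. -/
noncomputable def variation₀ (k : ℕ) (a r : ℝ) : ℝ :=
  cosh a / cosh r * (sinh a / sinh r) ^ (k - 1)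

/-- The factor `e₁` in the variation Jacobi field as a function of the radius `r = f(a, t)`. -/
noncomputable def variation₁ (k : ℕ) (a r : ℝ) : ℝ :=
  cosh a * ∫ u in 1..(sinh r / sinh a), variationKernel k a u

/-- The variation Jacobi field `e` as a function of the radius `r = f(a, t)`. -/
noncomputable def variation (k : ℕ) (a r : ℝ) : ℝ :=
  -variation₀ k a r + vertical k a r * variation₁ k a r

/-- The number `E(a)`, the limit of `e₁` and of `e` at infinite radius. -/
noncomputable def variationLimit (k : ℕ) (a : ℝ) : ℝ :=
  cosh a * ∫ u in Ioi 1, variationKernel k a u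

section Radius

variable {k : ℕ} {a : ℝ}

lemma sinh_pos_of_mem_Ici (ha : 0 < a) {r : ℝ} (hr : r ∈ Ici a) : 0 < sinh r :=
  sinh_pos_iff.2 (ha.trans_le hr)

lemma sinh_div_sinh_pos (ha : 0 < a) {r : ℝ} (hr : r ∈ Ici a) : 0 < sinh a / sinh r :=
  div_pos (sinh_pos_iff.2 ha) (sinh_pos_of_mem_Ici ha hr)

lemma continuousOn_sinh_div_sinh (ha : 0 < a) :
    ContinuousOn (fun r ↦ sinh a / sinh r) (Ici a) :=
  continuousOn_const.div continuous_sinh.continuousOn fun _ hr ↦ (sinh_pos_of_mem_Ici ha hr).ne'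

lemma strictAntiOn_sinh_div_sinh (ha : 0 < a) :
    StrictAntiOn (fun r ↦ sinh a / sinh r) (Ici a) :=
  fun _ hx _ _ hxy ↦
    div_lt_div_of_pos_left (sinh_pos_iff.2 ha) (sinh_pos_of_mem_Ici ha hx) (sinh_lt_sinh.2 hxy)

lemma tendsto_sinh_div_sinh : Tendsto (fun r ↦ sinh a / sinh r) atTop (𝓝 0) :=
  tendsto_sinh_atTop.const_div_atTop _

lemma vertical_self (ha : 0 < a) : vertical k a a = 0 := by
  simp [vertical, div_self (sinh_pos_iff.2 ha).ne']

lemma continuousOn_vertical (ha : 0 < a) : ContinuousOn (vertical k a) (Ici a) :=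
  (continuousOn_const.sub ((continuousOn_sinh_div_sinh ha).pow _)).sqrt

lemma strictMonoOn_vertical (hk : k ≠ 0) (ha : 0 < a) : StrictMonoOn (vertical k a) (Ici a) := by
  intro x hx y hy hxy
  have hpow := pow_lt_pow_left₀ (strictAntiOn_sinh_div_sinh ha hx hy hxy)
    (sinh_div_sinh_pos ha hy).le (mul_ne_zero two_ne_zero hk)
  have hle : sinh a / sinh x ≤ 1 :=
    (div_le_one (sinh_pos_of_mem_Ici ha hx)).2 (sinh_le_sinh.2 hx)
  exact sqrt_lt_sqrt (sub_nonneg.2 (pow_le_one₀ (sinh_div_sinh_pos ha hx).le hle))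
    (sub_lt_sub_left hpow 1)

lemma vertical_pos (hk : k ≠ 0) (ha : 0 < a) {r : ℝ} (hr : a < r) : 0 < vertical k a r :=
  (vertical_self ha).symm.trans_lt (strictMonoOn_vertical hk ha self_mem_Ici hr.le hr)

lemma tendsto_vertical (hk : k ≠ 0) : Tendsto (vertical k a) atTop (𝓝 1) := by
  change Tendsto (fun r ↦ √(1 - (sinh a / sinh r) ^ (2 * k))) atTop (𝓝 1)
  simpa [hk] using ((tendsto_sinh_div_sinh (a := a).pow (2 * k)).const_sub 1).sqrt

lemma variation₀_self (ha : 0 < a) : variation₀ k a a = 1 := by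
  simp [variation₀, div_self (sinh_pos_iff.2 ha).ne', div_self (cosh_pos a).ne']

lemma continuousOn_variation₀ (ha : 0 < a) : ContinuousOn (variation₀ k a) (Ici a) :=
  (continuousOn_const.div continuous_cosh.continuousOn fun r _ ↦ (cosh_pos r).ne').mul
    ((continuousOn_sinh_div_sinh ha).pow _)

lemma strictAntiOn_variation₀ (ha : 0 < a) : StrictAntiOn (variation₀ k a) (Ici a) := by
  intro x hx y hy hxy
  have hcosh : cosh a / cosh y < cosh a / cosh x :=
    div_lt_div_of_pos_left (cosh_pos a) (cosh_pos x)
      (cosh_strictMonoOn (ha.le.trans hx) (ha.le.trans hy) hxy)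
  have hpow := pow_le_pow_left₀ (sinh_div_sinh_pos ha hy).le
    (strictAntiOn_sinh_div_sinh ha hx hy hxy).le (k - 1)
  exact mul_lt_mul hcosh hpow (pow_pos (sinh_div_sinh_pos ha hy) _)
    (div_pos (cosh_pos a) (cosh_pos x)).le

lemma tendsto_variation₀ : Tendsto (variation₀ k a) atTop (𝓝 0) := by
  change Tendsto (fun r ↦ cosh a / cosh r * (sinh a / sinh r) ^ (k - 1)) atTop (𝓝 0)
  simpa using (tendsto_cosh_atTop.const_div_atTop (cosh a)).mul
    (tendsto_sinh_div_sinh (a := a).pow (k - 1))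

lemma variationKernel_pos (hk : k ≠ 0) {u : ℝ} (hu : 1 < u) : 0 < variationKernel k a u :=
  mul_pos (rpow_pos_of_pos (sub_pos.2 (one_lt_pow₀ hu (by positivity))) _)
    (rpow_pos_of_pos (by positivity) _)

lemma continuousOn_variationKernel (hk : k ≠ 0) :
    ContinuousOn (variationKernel k a) (Ioi 1) := by
  refine ContinuousOn.mul (ContinuousOn.rpow_const (by fun_prop) fun u hu ↦ Or.inl ?_)
    (ContinuousOn.rpow_const (by fun_prop) fun u _ ↦ Or.inl (by positivity))
  exact (sub_pos.2 (one_lt_pow₀ hu (by positivity))).ne'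

lemma variationKernel_le (hk : k ≠ 0) (ha : 0 < a) {u : ℝ} (hu : 1 < u) :
    variationKernel k a u ≤ (sinh a)⁻¹ * (1 / (u * √(u ^ (2 * k) - 1))) := by
  have : 0 < sinh a := sinh_pos_iff.2 ha
  have : 0 < u := one_pos.trans hu
  have hsub : 0 < u ^ (2 * k) - 1 := sub_pos.2 (one_lt_pow₀ hu (by positivity))
  have hdecay : (sinh a ^ 2 * u ^ 2 + 1) ^ (-(3 : ℝ) / 2) ≤ (sinh a * u)⁻¹ := calc
    (sinh a ^ 2 * u ^ 2 + 1) ^ (-(3 : ℝ) / 2) ≤ (sinh a ^ 2 * u ^ 2 + 1) ^ (-(1 : ℝ) / 2) :=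
      rpow_le_rpow_of_exponent_le (le_add_of_nonneg_left (by positivity)) (by norm_num)
    _ ≤ ((sinh a * u) ^ 2) ^ (-(1 : ℝ) / 2) :=
      rpow_le_rpow_of_nonpos (by positivity) (by rw [mul_pow]; linarith) (by norm_num)
    _ = (sinh a * u)⁻¹ := by rw [rpow_neg_one_div_two (sq_nonneg _), sqrt_sq (by positivity)]
  calc variationKernel k a u ≤ (√(u ^ (2 * k) - 1))⁻¹ * (sinh a * u)⁻¹ := by
        rw [variationKernel, rpow_neg_one_div_two hsub.le]
        exact mul_le_mul_of_nonneg_left hdecay (by positivity)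
    _ = (sinh a)⁻¹ * (1 / (u * √(u ^ (2 * k) - 1))) := by
        rw [one_div, mul_inv, mul_inv]
        ring

lemma integrableOn_variationKernel (hk : k ≠ 0) (ha : 0 < a) :
    IntegrableOn (variationKernel k a) (Ioi 1) := by
  have hbound : IntegrableOn (fun u : ℝ ↦ 1 / (u * √(u ^ (2 * k) - 1))) (Ioi 1) := by
    simpa only [id_eq, one_pow] using integrableOn_Ioi_deriv_div_mul_sqrt
      (w := id) (w' := fun _ ↦ 1) (a := 1) hk one_pos continuousWithinAt_id
      (fun x _ ↦ hasDerivAt_id x) (fun _ _ ↦ zero_le_one) (fun _ hx ↦ hx) tendsto_id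
  refine (hbound.const_mul (sinh a)⁻¹).mono'
    ((continuousOn_variationKernel hk).aestronglyMeasurable measurableSet_Ioi) ?_
  refine (ae_restrict_mem measurableSet_Ioi).mono fun u hu ↦ ?_
  rw [norm_of_nonneg (variationKernel_pos hk hu).le]
  exact variationKernel_le hk ha hu

lemma variationLimit_pos (hk : k ≠ 0) (ha : 0 < a) : 0 < variationLimit k a := by
  refine mul_pos (cosh_pos a) ?_
  simpa using intervalIntegral_lt_integral_Ioi (integrableOn_variationKernel hk ha)
    (fun _ ↦ variationKernel_pos hk) le_rfl

lemma one_le_sinh_div_sinh (ha : 0 < a) {r : ℝ} (hr : r ∈ Ici a) : 1 ≤ sinh r / sinh a :=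
  (one_le_div (sinh_pos_iff.2 ha)).2 (sinh_le_sinh.2 hr)

lemma variation₁_self (ha : 0 < a) : variation₁ k a a = 0 := by
  simp [variation₁, div_self (sinh_pos_iff.2 ha).ne']

lemma continuousOn_variation₁ (hk : k ≠ 0) (ha : 0 < a) :
    ContinuousOn (variation₁ k a) (Ici a) :=
  continuousOn_const.mul <|
    (continuousOn_Ici_integral (integrableOn_variationKernel hk ha)).comp
      (continuous_sinh.div_const _).continuousOn fun _ ↦ one_le_sinh_div_sinh ha

lemma strictMonoOn_variation₁ (hk : k ≠ 0) (ha : 0 < a) :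
    StrictMonoOn (variation₁ k a) (Ici a) := by
  intro x hx y hy hxy
  refine mul_lt_mul_of_pos_left ?_ (cosh_pos a)
  exact strictMonoOn_Ici_integral (integrableOn_variationKernel hk ha)
    (fun _ ↦ variationKernel_pos hk) (one_le_sinh_div_sinh ha hx) (one_le_sinh_div_sinh ha hy)
    (div_lt_div_of_pos_right (sinh_lt_sinh.2 hxy) (sinh_pos_iff.2 ha))

lemma tendsto_variation₁ (hk : k ≠ 0) (ha : 0 < a) :
    Tendsto (variation₁ k a) atTop (𝓝 (variationLimit k a)) :=
  (intervalIntegral_tendsto_integral_Ioi 1 (integrableOn_variationKernel hk ha)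
    (tendsto_sinh_atTop.atTop_div_const (sinh_pos_iff.2 ha))).const_mul _

lemma variation_self (ha : 0 < a) : variation k a a = -1 := by
  simp [variation, variation₀_self ha, vertical_self ha]

lemma continuousOn_variation (hk : k ≠ 0) (ha : 0 < a) :
    ContinuousOn (variation k a) (Ici a) :=
  (continuousOn_variation₀ ha).neg.add
    ((continuousOn_vertical ha).mul (continuousOn_variation₁ hk ha))

lemma strictMonoOn_variation (hk : k ≠ 0) (ha : 0 < a) : StrictMonoOn (variation k a) (Ici a) := by
  have hv := (strictMonoOn_vertical hk ha).monotoneOn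
  have he₁ := (strictMonoOn_variation₁ hk ha).monotoneOn
  refine (strictAntiOn_variation₀ ha).neg.add_monotone (hv.mul he₁ ?_ ?_)
  · exact fun r _ ↦ sqrt_nonneg _
  · exact fun r hr ↦ (variation₁_self ha).symm.trans_le (he₁ self_mem_Ici hr hr)

lemma tendsto_variation (hk : k ≠ 0) (ha : 0 < a) :
    Tendsto (variation k a) atTop (𝓝 (variationLimit k a)) := by
  change Tendsto (fun r ↦ -variation₀ k a r + vertical k a r * variation₁ k a r) atTop _
  simpa using tendsto_variation₀.neg.add ((tendsto_vertical hk).mul (tendsto_variation₁ hk ha))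

lemma strictMonoOn_variation_add_limit_mul_vertical (hk : k ≠ 0) (ha : 0 < a) :
    StrictMonoOn (fun r ↦ variation k a r + variationLimit k a * vertical k a r) (Ici a) :=
  fun _ hx _ hy hxy ↦ add_lt_add (strictMonoOn_variation hk ha hx hy hxy) <|
    mul_lt_mul_of_pos_left (strictMonoOn_vertical hk ha hx hy hxy) (variationLimit_pos hk ha)

lemma exists_variation_eq_zero (hk : k ≠ 0) (ha : 0 < a) :
    ∃ ρ ∈ Ioi a, variation k a ρ = 0 := by
  obtain ⟨b, hb, hab⟩ := ((tendsto_variation hk ha).eventually_const_lt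
    (variationLimit_pos hk ha) |>.and (eventually_ge_atTop a)).exists
  obtain ⟨ρ, hρ, hzero⟩ := intermediate_value_Ioo hab
    ((continuousOn_variation hk ha).mono Icc_subset_Ici_self)
    ⟨by rw [variation_self ha]; norm_num, hb⟩
  exact ⟨ρ, hρ.1, hzero⟩

lemma exists_variation_add_limit_mul_vertical_eq_zero (hk : k ≠ 0) (ha : 0 < a) {ρ : ℝ}
    (hρ : ρ ∈ Ioi a) (hzero : variation k a ρ = 0) :
    ∃ σ ∈ Ioo a ρ, variation k a σ + variationLimit k a * vertical k a σ = 0 := by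
  refine intermediate_value_Ioo hρ.le (((continuousOn_variation hk ha).add
    (continuousOn_const.mul (continuousOn_vertical ha))).mono Icc_subset_Ici_self) ⟨?_, ?_⟩
  · simp [variation_self ha, vertical_self ha]
  · simpa [hzero] using mul_pos (variationLimit_pos hk ha) (vertical_pos hk ha hρ)

end Radius

/-! ### Jacobi fields along the profile -/

namespace IsProfile

variable {k : ℕ} {a T : ℝ} {f : ℝ → ℝ}

lemma injOn_comp (hf : IsProfile k a T f) (hk : k ≠ 0) (ha : 0 < a) {g : ℝ → ℝ}
    (hg : InjOn g (Ici a)) : InjOn (g ∘ f) (Ico 0 T) :=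
  hg.comp (hf.strictMonoOn_Ico hk ha).injOn fun _ ↦ hf.le_apply hk ha

lemma tendsto_vertical_comp (hf : IsProfile k a (halfHeight k a) f) (hk : k ≠ 0) (ha : 0 < a) :
    Tendsto (fun t ↦ vertical k a (f t)) (𝓝[<] halfHeight k a) (𝓝 1) :=
  (tendsto_vertical hk).comp (hf.tendsto_atTop hk ha)

lemma exists_zeros (hf : IsProfile k a (halfHeight k a) f) (hk : k ≠ 0) (ha : 0 < a) :
    ∃ z ∈ Ioo 0 (halfHeight k a), variation k a (f z) = 0 ∧
      (∀ t ∈ Ioo 0 (halfHeight k a), variation k a (f t) = 0 → t = z) ∧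
      ∃ ℓ ∈ Ioo 0 z, variation k a (f ℓ) + variationLimit k a * vertical k a (f ℓ) = 0 ∧
        ∀ t ∈ Ioo 0 (halfHeight k a),
          variation k a (f t) + variationLimit k a * vertical k a (f t) = 0 → t = ℓ := by
  have hsub := Ioo_subset_Ico_self (a := 0) (b := halfHeight k a)
  obtain ⟨ρ, hρ, hρ0⟩ := exists_variation_eq_zero hk ha
  obtain ⟨σ, hσ, hσ0⟩ := exists_variation_add_limit_mul_vertical_eq_zero hk ha hρ hρ0
  obtain ⟨z, hz, rfl⟩ := hf.surjOn_Ioi hk ha hρ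
  obtain ⟨ℓ, hℓ, rfl⟩ := hf.surjOn_Ioi hk ha hσ.1
  refine ⟨z, hz, hρ0, fun t ht h ↦ ?_, ℓ, ⟨hℓ.1, ?_⟩, hσ0, fun t ht h ↦ ?_⟩
  · exact hf.injOn_comp hk ha (strictMonoOn_variation hk ha).injOn (hsub ht) (hsub hz)
      (h.trans hρ0.symm)
  · exact ((hf.strictMonoOn_Ico hk ha).lt_iff_lt (hsub hℓ) (hsub hz)).1 hσ.2
  · exact hf.injOn_comp hk ha (strictMonoOn_variation_add_limit_mul_vertical hk ha).injOn
      (hsub ht) (hsub hℓ) (h.trans hσ0.symm)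

end IsProfile

end Catenoid

/-- Jacobi fields on the catenoid in `ℍⁿ × ℝ`: `E(a)` is finite and positive; the vertical
Jacobi field `v` vanishes only at `0` and tends to `1` at `T(a)`; the variation Jacobi field
`e` satisfies `e(0) = −1` and has exactly one zero `z(a) ∈ (0, T(a))`; and
`y = e + E(a)·v` has exactly one zero `ℓ(a) ∈ (0, T(a))`, with `ℓ(a) ∈ (0, z(a))`. -/
theorem stmt13 (n : ℕ) (hn : 2 ≤ n) (a : ℝ) (ha : 0 < a)
    (T : ℝ)
    (hT : T = Real.sinh a ^ (n-1) *
      ∫ u in Set.Ioi a, (Real.sinh u ^ (2*n-2) - Real.sinh a ^ (2*n-2)) ^ (-(1:ℝ)/2))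
    (f : ℝ → ℝ)
    (hf : ContDiffOn ℝ (⊤ : ℕ∞) f (Set.Ioo (-T) T))
    (hfeven : ∀ t ∈ Set.Ioo (-T) T, f (-t) = f t)
    (hf0 : f 0 = a) (hf0' : deriv f 0 = 0)
    (hode : ∀ t ∈ Set.Ioo (-T) T,
      Real.sinh (f t) * deriv (deriv f) t
        = (n - 1 : ℝ) * Real.cosh (f t) * (1 + (deriv f t) ^ 2))
    (v e₀ e₁ e : ℝ → ℝ)
    (hv : ∀ t, 0 ≤ t →
      v t = Real.sqrt (1 - (Real.sinh a / Real.sinh (f t)) ^ (2*n-2)))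
    (he₀ : ∀ t, 0 ≤ t →
      e₀ t = (Real.cosh a / Real.cosh (f t)) * (Real.sinh a / Real.sinh (f t)) ^ (n-2))
    (he₁ : ∀ t, 0 ≤ t →
      e₁ t = Real.cosh a * ∫ u in (1:ℝ)..(Real.sinh (f t) / Real.sinh a),
        (u ^ (2*n-2) - 1) ^ (-(1:ℝ)/2) * (Real.sinh a ^ 2 * u ^ 2 + 1) ^ (-(3:ℝ)/2))
    (he : ∀ t, 0 ≤ t → e t = -e₀ t + v t * e₁ t)
    (E : ℝ)
    (hE : E = Real.cosh a * ∫ u in Set.Ioi (1:ℝ),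
      (u ^ (2*n-2) - 1) ^ (-(1:ℝ)/2) * (Real.sinh a ^ 2 * u ^ 2 + 1) ^ (-(3:ℝ)/2)) :
    (MeasureTheory.IntegrableOn
      (fun u => (u ^ (2*n-2) - 1) ^ (-(1:ℝ)/2) * (Real.sinh a ^ 2 * u ^ 2 + 1) ^ (-(3:ℝ)/2))
      (Set.Ioi 1) ∧ 0 < E) ∧
    (v 0 = 0 ∧ (∀ t ∈ Set.Ioo 0 T, v t ≠ 0) ∧ Filter.Tendsto v (𝓝[<] T) (𝓝 1)) ∧
    (e 0 = -1 ∧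
      ∃ z ∈ Set.Ioo 0 T, e z = 0 ∧ (∀ t ∈ Set.Ioo 0 T, e t = 0 → t = z) ∧
        ∃ ℓ ∈ Set.Ioo 0 z, e ℓ + E * v ℓ = 0 ∧
          ∀ t ∈ Set.Ioo 0 T, e t + E * v t = 0 → t = ℓ) := by
  obtain ⟨k, rfl⟩ : ∃ k, n = k + 1 := Nat.exists_eq_add_of_le' (by lia)
  have hk : k ≠ 0 := by lia
  simp only [show 2 * (k + 1) - 2 = 2 * k by lia, show k + 1 - 2 = k - 1 by lia,
    Nat.add_sub_cancel, Nat.cast_add_one, add_sub_cancel_right] at hT hode hv he₀ he₁ hE ⊢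
  obtain rfl : T = Catenoid.halfHeight k a := hT
  obtain rfl : E = Catenoid.variationLimit k a := hE
  have hprofile : Catenoid.IsProfile k a (Catenoid.halfHeight k a) f :=
    ⟨hf.of_le (WithTop.coe_le_coe.2 le_top), hf0, hf0', hode⟩
  have hv_eq : ∀ t, 0 ≤ t → v t = Catenoid.vertical k a (f t) := hv
  have he_eq (t : ℝ) (ht : 0 ≤ t) : e t = Catenoid.variation k a (f t) := by
    rw [he t ht, he₀ t ht, hv t ht, he₁ t ht]
    rfl
  obtain ⟨z, hz, hz0, hz_unique, ℓ, hℓ, hℓ0, hℓ_unique⟩ := hprofile.exists_zeros hk ha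
  refine ⟨⟨Catenoid.integrableOn_variationKernel hk ha, Catenoid.variationLimit_pos hk ha⟩,
    ⟨?_, fun t ht ↦ ?_, ?_⟩, ?_, z, hz, ?_, fun t ht ↦ ?_, ℓ, hℓ, ?_, fun t ht ↦ ?_⟩
  · rw [hv_eq 0 le_rfl, hf0, Catenoid.vertical_self ha]
  · exact hv_eq t ht.1.le ▸ (Catenoid.vertical_pos hk ha (hprofile.lt_apply hk ha ht)).ne'
  · refine (hprofile.tendsto_vertical_comp hk ha).congr' ?_
    filter_upwards [Ioo_mem_nhdsLT (hz.1.trans hz.2)] with t ht using (hv_eq t ht.1.le).symm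
  · rw [he_eq 0 le_rfl, hf0, Catenoid.variation_self ha]
  · rw [he_eq z hz.1.le, hz0]
  · exact he_eq t ht.1.le ▸ hz_unique t ht
  · rw [he_eq ℓ hℓ.1.le, hv_eq ℓ hℓ.1.le, hℓ0]
  · exact he_eq t ht.1.le ▸ hv_eq t ht.1.le ▸ hℓ_unique t ht
end
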